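/- arXiv:2408.02488 — 3 statements merged into one kernel-verified Lean document; each statement's English description precedes it below -/
import Mathlib

section
/- Let G and H be two n-vertex graphs whose adjacency matrices are written in the block form A(G) = [[A₁, b],[bᵀ, 0]] and A(H) = [[B₁, c],[cᵀ, 0]], where the last vertex of each graph is designated as a root (so A₁ = A(G−uₙ), B₁ = A(H−vₙ), and b, c ∈ {0,1}^{n−1} are the neighborhood indicator vectors of the roots). If G and H are generalized cospectral and G−uₙ and H−vₙ are generalized cospectral, then there exists an (n−1)×(n−1) regular orthogonal matrix Q such that Qᵀ A₁ Q = B₁ and Qᵀ b = c (equivalently, the block-diagonal regular orthogonal matrix diag(Q,1) satisfies diag(Qᵀ,1) A(G) diag(Q,1) = A(H)). -/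
open Matrix

noncomputable section

/-- The adjacency matrix of the complement graph: `J - I - A`. -/
def complMat {V : Type} [Fintype V] [DecidableEq V] (A : Matrix V V ℝ) : Matrix V V ℝ :=
  (Matrix.of fun _ _ => (1 : ℝ)) - 1 - A

/-- Two graphs, given by their adjacency matrices, are generalized cospectral if they are
cospectral and their complements are cospectral. -/
def GenCospectral {V : Type} [Fintype V] [DecidableEq V] (A B : Matrix V V ℝ) : Prop :=
  A.charpoly = B.charpoly ∧ (complMat A).charpoly = (complMat B).charpoly

/-- The bordered matrix `[[A, b], [bᵀ, 0]]` (adjacency matrix of the overgraph `G + b`). -/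
def border {V : Type} [Fintype V] [DecidableEq V] (A : Matrix V V ℝ) (b : V → ℝ) :
    Matrix (V ⊕ Unit) (V ⊕ Unit) ℝ :=
  Matrix.fromBlocks A (Matrix.of fun i _ => b i) (Matrix.of fun _ j => b j) 0

/-!
The walk generating function `W_A(u, v) = ∑ k, (u ⬝ᵥ A ^ k *ᵥ v) X ^ k` is the bilinear form of
`(1 - X A)⁻¹`. Determinants detect it on particular vectors: by the matrix determinant lemma,
`det (1 - X (A - J)) / det (1 - X A) = 1 + X W_A(1, 1)`, where `A - J` is minus the complement
minus the identity, and by the Schur complement,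
`det (1 - X (border A b)) / det (1 - X A) = 1 - X² W_A(b, b)`. Hence `W_A(1, 1)` and `W_A(b, b)` are
invariants of the pair. Solving the linear system of the bordered matrix gives
`(1 - X² W_A(b, b)) (W_{border A b}(1, 1) - W_A(1, 1)) = (1 + X W_A(1, b))²`,
and a square root with constant coefficient `1` is unique, so `W_A(1, b)` is an invariant as well.

So all the inner products `⟪A ^ k x, y⟫` with `x, y ∈ {1, b}` agree with their counterparts for `B`.
Begin with any isometry intertwining the two matrices, and correct it by one reflection per vector.
If `v` and `w` have the same moments `⟪A ^ k v, v⟫ = ⟪A ^ k w, w⟫`, then `v + w` is orthogonal to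
the `A`-invariant subspace generated by `v - w`; the reflection negating that subspace commutes with
`A`, sends `v` to `w`, and fixes every vector already matched.
-/

open scoped PowerSeries
open PowerSeries (X C)

section Walks

variable {R n p : Type*} [CommRing R] [Fintype n] [DecidableEq n] [Fintype p] [DecidableEq p]

theorem charpoly_neg (A : Matrix n n R) :
    (-A).charpoly = (-1) ^ Fintype.card n * A.charpoly.comp (-Polynomial.X) := by
  have hentries :
      (charmatrix A).map (Polynomial.compRingHom (-Polynomial.X)) = -charmatrix (-A) := by
    ext1 i j
    obtain rfl | h := eq_or_ne i j
    · simp only [Polynomial.coe_compRingHom, map_apply, charmatrix_apply_eq, Polynomial.sub_comp,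
        Polynomial.X_comp, Polynomial.C_comp, Matrix.neg_apply, map_neg, sub_neg_eq_add,
        neg_add_rev]
      ring
    · simp [h]
  have hcomp : A.charpoly.comp (-Polynomial.X) = (-1) ^ Fintype.card n * (-A).charpoly := by
    rw [charpoly, ← Polynomial.coe_compRingHom_apply, RingHom.map_det, RingHom.mapMatrix_apply,
      hentries, det_neg, charpoly]
  rw [hcomp, ← mul_assoc, ← mul_pow, neg_one_mul, neg_neg, one_pow, one_mul]

/-- The matrix `1 - X A` over power series, the reverse of `charmatrix A`. Unlike `charmatrix A`, it
is invertible without passing to fractions, since its constant term is the identity. -/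
def charmatrixRev (A : Matrix n n R) : Matrix n n R⟦X⟧ :=
  1 - (X : R⟦X⟧) • A.map C

/-- The generating function of weighted walks of a matrix `A` with initial weights `u` and final
weights `v`. For an adjacency matrix and indicator vectors, its `k`-th coefficient counts the walks
of length `k` from one vertex set to the other. -/
def walkSeries (A : Matrix n n R) (u v : n → R) : R⟦X⟧ :=
  PowerSeries.mk fun k => u ⬝ᵥ A ^ k *ᵥ v

theorem det_charmatrixRev (A : Matrix n n R) :
    (charmatrixRev A).det = (A.charpolyRev : R⟦X⟧) := by
  rw [charpolyRev, ← Polynomial.coeToPowerSeries.ringHom_apply, RingHom.map_det]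
  congr 1
  ext1 i j
  by_cases h : i = j <;> simp [charmatrixRev, h, PowerSeries.X_mul]

theorem det_charmatrixRev_congr {A : Matrix n n R} {B : Matrix p p R}
    (h : A.charpoly = B.charpoly) : (charmatrixRev A).det = (charmatrixRev B).det := by
  rw [det_charmatrixRev, det_charmatrixRev, ← reverse_charpoly, ← reverse_charpoly, h]

theorem charmatrixRev_mul_mk_pow (A : Matrix n n R) :
    charmatrixRev A * (of fun i j => PowerSeries.mk fun k => (A ^ k) i j) = 1 := by
  ext i j k
  rw [charmatrixRev, sub_mul, one_mul, smul_mul]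
  cases k with
  | zero => by_cases h : i = j <;> simp [one_apply, h]
  | succ k =>
    by_cases h : i = j <;>
      simp [one_apply, h, pow_succ' A k, Matrix.mul_apply, PowerSeries.coeff_one,
        PowerSeries.coeff_succ_X_mul]

theorem isUnit_det_charmatrixRev (A : Matrix n n R) : IsUnit (charmatrixRev A).det :=
  isUnit_det_of_right_inverse (charmatrixRev_mul_mk_pow A)

theorem charmatrixRev_inv (A : Matrix n n R) :
    (charmatrixRev A)⁻¹ = of fun i j => PowerSeries.mk fun k => (A ^ k) i j :=
  inv_eq_right_inv (charmatrixRev_mul_mk_pow A)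

theorem walkSeries_eq_dotProduct (A : Matrix n n R) (u v : n → R) :
    walkSeries A u v = (C ∘ u) ⬝ᵥ (charmatrixRev A)⁻¹ *ᵥ (C ∘ v) := by
  ext k
  simp [walkSeries, charmatrixRev_inv, dotProduct, mulVec, PowerSeries.coeff_C_mul,
    PowerSeries.coeff_mul_C]

theorem coeff_walkSeries (A : Matrix n n R) (u v : n → R) (k : ℕ) :
    PowerSeries.coeff k (walkSeries A u v) = u ⬝ᵥ A ^ k *ᵥ v :=
  PowerSeries.coeff_mk k _

theorem walkSeries_comm {A : Matrix n n R} (hA : A.IsSymm) (u v : n → R) :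
    walkSeries A u v = walkSeries A v u := by
  ext k
  rw [coeff_walkSeries, coeff_walkSeries, dotProduct_mulVec, ← mulVec_transpose, (hA.pow k).eq,
    dotProduct_comm]

theorem det_add_vecMulVec {S : Type*} [CommRing S] {M : Matrix n n S} (hM : IsUnit M.det)
    (u v : n → S) : (M + vecMulVec u v).det = M.det * (1 + v ⬝ᵥ M⁻¹ *ᵥ u) := by
  have hfactor : M + vecMulVec u v = M * (1 + vecMulVec (M⁻¹ *ᵥ u) v) := by
    rw [mul_add, mul_one, mul_vecMulVec, mulVec_mulVec, mul_nonsing_inv _ hM, one_mulVec]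
  rw [hfactor, det_mul, vecMulVec_eq Unit, det_one_add_replicateCol_mul_replicateRow]

theorem det_charmatrixRev_sub_vecMulVec (A : Matrix n n R) (u v : n → R) :
    (charmatrixRev (A - vecMulVec u v)).det =
      (charmatrixRev A).det * (1 + X * walkSeries A v u) := by
  have hrank1 : charmatrixRev (A - vecMulVec u v) = charmatrixRev A +
      vecMulVec ((X : R⟦X⟧) • (C ∘ u)) (C ∘ v) := by
    ext1 i j
    simp only [charmatrixRev, vecMulVec_apply, Matrix.sub_apply, Matrix.add_apply,
      Matrix.smul_apply, map_apply, Pi.smul_apply, Function.comp_apply, smul_eq_mul, map_sub,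
      map_mul]
    ring
  rw [hrank1, det_add_vecMulVec (isUnit_det_charmatrixRev A), mulVec_smul, dotProduct_smul,
    ← walkSeries_eq_dotProduct, smul_eq_mul]

theorem walkSeries_eq_of_charpoly_eq {A : Matrix n n R} {B : Matrix p p R}
    {u u' : n → R} {v v' : p → R} (h : A.charpoly = B.charpoly)
    (hsub : (A - vecMulVec u u').charpoly = (B - vecMulVec v v').charpoly) :
    walkSeries A u' u = walkSeries B v' v := by
  have hdet := det_charmatrixRev_congr hsub
  rw [det_charmatrixRev_sub_vecMulVec, det_charmatrixRev_sub_vecMulVec,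
    det_charmatrixRev_congr h] at hdet
  exact PowerSeries.X_mul_cancel
    (add_left_cancel ((isUnit_det_charmatrixRev B).mul_left_cancel hdet))

theorem mul_walkSeries_eq_dotProduct {A : Matrix n n R} {d : R⟦X⟧} {y : n → R⟦X⟧} {v : n → R}
    (h : charmatrixRev A *ᵥ y = d • (C ∘ v)) (u : n → R) :
    d * walkSeries A u v = (C ∘ u) ⬝ᵥ y := by
  rw [walkSeries_eq_dotProduct, ← smul_eq_mul, ← dotProduct_smul, ← mulVec_smul, ← h,
    mulVec_mulVec, nonsing_inv_mul _ (isUnit_det_charmatrixRev A), one_mulVec]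

theorem eq_of_sq_one_add_X_mul_eq [IsDomain R] [NeZero (2 : R)] {f g : R⟦X⟧}
    (h : (1 + X * f) ^ 2 = (1 + X * g) ^ 2) : f = g := by
  refine PowerSeries.X_mul_cancel (add_left_cancel (a := 1) ?_)
  refine (sq_eq_sq_iff_eq_or_eq_neg.1 h).resolve_right fun hneg => ?_
  have hconst : (1 : R) = -1 := by simpa using congrArg PowerSeries.constantCoeff hneg
  exact two_ne_zero (by linear_combination hconst : (2 : R) = 0)

end Walks

section Border

variable {V : Type} [Fintype V] [DecidableEq V]

theorem charmatrixRev_border (A : Matrix V V ℝ) (b : V → ℝ) :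
    charmatrixRev (border A b) = fromBlocks (charmatrixRev A)
      (replicateCol Unit (-(X : ℝ⟦X⟧) • (C ∘ b)))
      (replicateRow Unit (-(X : ℝ⟦X⟧) • (C ∘ b))) 1 := by
  ext1 (i | i) (j | j) <;> simp [charmatrixRev, border, one_apply]

theorem det_charmatrixRev_border (A : Matrix V V ℝ) (b : V → ℝ) :
    (charmatrixRev (border A b)).det =
      (charmatrixRev A).det * (1 - X ^ 2 * walkSeries A b b) := by
  have := invertibleOfIsUnitDet _ (isUnit_det_charmatrixRev A)
  rw [charmatrixRev_border, det_fromBlocks₁₁, invOf_eq_nonsing_inv, Matrix.mul_assoc,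
    ← replicateCol_mulVec, det_unique (n := Unit), Matrix.sub_apply,
    replicateRow_mul_replicateCol_apply, one_apply_eq, mulVec_smul, dotProduct_smul,
    smul_dotProduct, ← walkSeries_eq_dotProduct, smul_eq_mul, smul_eq_mul]
  ring

theorem charmatrixRev_border_mulVec (A : Matrix V V ℝ) (b : V → ℝ) (y : V → ℝ⟦X⟧) (r : ℝ⟦X⟧) :
    charmatrixRev (border A b) *ᵥ Sum.elim y (fun _ => r) =
      Sum.elim (charmatrixRev A *ᵥ y - (X * r) • (C ∘ b)) fun _ => r - X * ((C ∘ b) ⬝ᵥ y) := by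
  rw [charmatrixRev_border, fromBlocks_mulVec, Sum.elim_comp_inl, Sum.elim_comp_inr, one_mulVec,
    replicateRow_mulVec_eq_const, smul_dotProduct]
  ext1 (i | i)
  · simp only [Sum.elim_inl, Pi.add_apply, Pi.sub_apply, Pi.smul_apply, smul_eq_mul, mulVec,
      dotProduct, replicateCol_apply, Finset.univ_unique, Finset.sum_singleton]
    ring
  · simp only [Sum.elim_inr, Pi.add_apply, Function.const_apply, smul_eq_mul]
    ring

theorem walkSeries_border (A : Matrix V V ℝ) (b u v : V → ℝ) (s t : ℝ) :
    (1 - X ^ 2 * walkSeries A b b) *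
        (walkSeries (border A b) (Sum.elim u fun _ => s) (Sum.elim v fun _ => t) -
          walkSeries A u v) =
      (C s + X * walkSeries A u b) * (C t + X * walkSeries A b v) := by
  set d := 1 - X ^ 2 * walkSeries A b b with hd
  set r := C t + X * walkSeries A b v with hr
  -- `(y, r)` is `d` times the solution of the bordered system; the factor `d` clears the
  -- denominator left by eliminating the block `A`.
  let y : V → ℝ⟦X⟧ :=
    d • (charmatrixRev A)⁻¹ *ᵥ (C ∘ v) + (X * r) • (charmatrixRev A)⁻¹ *ᵥ (C ∘ b)
  have hdot (w : V → ℝ) : (C ∘ w) ⬝ᵥ y = d * walkSeries A w v + X * r * walkSeries A w b := by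
    simp only [y, dotProduct_add, dotProduct_smul, ← walkSeries_eq_dotProduct, smul_eq_mul]
  have hsolve : charmatrixRev (border A b) *ᵥ Sum.elim y (fun _ => r) =
      d • (C ∘ Sum.elim v fun _ => t) := by
    rw [charmatrixRev_border_mulVec, hdot]
    ext1 (i | i)
    · simp [y, mulVec_add, mulVec_smul, mul_nonsing_inv _ (isUnit_det_charmatrixRev A)]
    · simp only [Sum.elim_inr, Pi.smul_apply, Function.comp_apply, smul_eq_mul]
      linear_combination d * hr - r * hd
  have hborder := mul_walkSeries_eq_dotProduct hsolve (Sum.elim u fun _ => s)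
  rw [Sum.comp_elim, sumElim_dotProduct_sumElim, hdot, dotProduct, Finset.univ_unique,
    Finset.sum_singleton, Function.comp_apply] at hborder
  linear_combination hborder

theorem charpoly_sub_vecMulVec_one_one (A : Matrix V V ℝ) :
    (A - vecMulVec 1 1).charpoly =
      (-1) ^ Fintype.card V * (complMat A).charpoly.comp (-(Polynomial.X + 1)) := by
  have hcompl : A - vecMulVec 1 1 = -complMat A - scalar V 1 := by
    ext i j
    simp only [complMat, vecMulVec_one, Matrix.sub_apply, replicateCol_apply, Pi.one_apply,
      neg_sub, scalar_apply, diagonal_one, of_apply]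
    ring
  rw [hcompl, charpoly_sub_scalar, charpoly_neg, Polynomial.mul_comp, Polynomial.comp_assoc]
  simp

theorem GenCospectral.walkSeries_one_one_eq {A B : Matrix V V ℝ} (h : GenCospectral A B) :
    walkSeries A 1 1 = walkSeries B 1 1 :=
  walkSeries_eq_of_charpoly_eq h.1
    (by rw [charpoly_sub_vecMulVec_one_one, charpoly_sub_vecMulVec_one_one, h.2])

theorem walkSeries_self_eq_of_border_charpoly_eq {W : Type} [Fintype W] [DecidableEq W]
    {A : Matrix V V ℝ} {B : Matrix W W ℝ} {b : V → ℝ} {c : W → ℝ} (h : A.charpoly = B.charpoly)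
    (hborder : (border A b).charpoly = (border B c).charpoly) :
    walkSeries A b b = walkSeries B c c := by
  have hdet := det_charmatrixRev_congr hborder
  rw [det_charmatrixRev_border, det_charmatrixRev_border, det_charmatrixRev_congr h] at hdet
  exact PowerSeries.X_pow_mul_cancel
    (sub_right_injective ((isUnit_det_charmatrixRev B).mul_left_cancel hdet))

theorem sq_one_add_X_mul_walkSeries {A : Matrix V V ℝ} (hA : A.IsSymm) (b : V → ℝ) :
    (1 + X * walkSeries A 1 b) ^ 2 =
      (1 - X ^ 2 * walkSeries A b b) * (walkSeries (border A b) 1 1 - walkSeries A 1 1) := by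
  have hborder := walkSeries_border A b 1 1 1 1
  rw [walkSeries_comm hA b 1, map_one, ← sq, ← Pi.one_def, Sum.elim_one_one] at hborder
  exact hborder.symm

theorem GenCospectral.walkSeries_one_border_eq {A B : Matrix V V ℝ} {b c : V → ℝ}
    (h : GenCospectral A B) (hA : A.IsSymm) (hB : B.IsSymm)
    (hborder : GenCospectral (border A b) (border B c)) :
    walkSeries A 1 b = walkSeries B 1 c := by
  refine eq_of_sq_one_add_X_mul_eq ?_
  rw [sq_one_add_X_mul_walkSeries hA, sq_one_add_X_mul_walkSeries hB,
    h.walkSeries_one_one_eq, hborder.walkSeries_one_one_eq,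
    walkSeries_self_eq_of_border_charpoly_eq h.1 hborder.1]

end Border

section Reflection

open scoped RealInnerProductSpace

variable {E F ι : Type*} [NormedAddCommGroup E] [InnerProductSpace ℝ E]
  [NormedAddCommGroup F] [InnerProductSpace ℝ F]

theorem reflection_orthogonal_eq_of_sub_mem_of_add_mem {K : Submodule ℝ E}
    [K.HasOrthogonalProjection] {v w : E} (hsub : v - w ∈ K) (hadd : v + w ∈ Kᗮ) :
    Kᗮ.reflection v = w := by
  have hneg := Submodule.reflection_mem_subspace_orthogonal_precomplement_eq_neg hsub
  have hfix := Submodule.reflection_mem_subspace_eq_self hadd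
  rw [map_sub] at hneg
  rw [map_add] at hfix
  have htwice : (2 : ℝ) • Kᗮ.reflection v = (2 : ℝ) • w := by
    calc (2 : ℝ) • Kᗮ.reflection v
        = (Kᗮ.reflection v - Kᗮ.reflection w) + (Kᗮ.reflection v + Kᗮ.reflection w) := by module
      _ = (2 : ℝ) • w := by rw [hneg, hfix]; module
  exact smul_right_injective E two_ne_zero htwice

theorem reflection_apply_comm_of_isSymmetric {T : E →ₗ[ℝ] E} (hT : T.IsSymmetric)
    {K : Submodule ℝ E} [K.HasOrthogonalProjection] (hK : K ∈ Module.End.invtSubmodule T) (z : E) :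
    K.reflection (T z) = T (K.reflection z) := by
  have hproj : K.starProjection (T z) = T (K.starProjection z) := by
    refine Submodule.eq_starProjection_of_mem_orthogonal (hK (K.starProjection_apply_mem z)) ?_
    rw [← map_sub]
    exact hT.orthogonalComplement_mem_invtSubmodule hK (K.sub_starProjection_mem_orthogonal z)
  simp only [Submodule.reflection_apply, hproj, map_sub, map_nsmul]

/-- The smallest `T`-invariant subspace containing `w` (its Krylov space). -/
def cyclicSubspace (T : E →ₗ[ℝ] E) (w : E) : Submodule ℝ E :=
  Submodule.span ℝ (Set.range fun k : ℕ => (T ^ k) w)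

theorem self_mem_cyclicSubspace (T : E →ₗ[ℝ] E) (w : E) : w ∈ cyclicSubspace T w :=
  Submodule.subset_span ⟨0, rfl⟩

theorem cyclicSubspace_mem_invtSubmodule (T : E →ₗ[ℝ] E) (w : E) :
    cyclicSubspace T w ∈ Module.End.invtSubmodule T := by
  rw [Module.End.mem_invtSubmodule, cyclicSubspace, Submodule.span_le]
  rintro _ ⟨k, rfl⟩
  exact Submodule.subset_span ⟨k + 1, by simp only [pow_succ', Module.End.mul_apply]⟩

theorem mem_orthogonal_cyclicSubspace_iff {T : E →ₗ[ℝ] E} {w z : E} :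
    z ∈ (cyclicSubspace T w)ᗮ ↔ ∀ k : ℕ, ⟪(T ^ k) w, z⟫ = 0 := by
  rw [← Submodule.span_singleton_le_iff_mem, ← Submodule.isOrtho_iff_le, Submodule.isOrtho_comm,
    cyclicSubspace, Submodule.isOrtho_span]
  simp

theorem add_mem_orthogonal_cyclicSubspace_sub {T : E →ₗ[ℝ] E} (hT : T.IsSymmetric) {v w : E}
    (h : ∀ k : ℕ, ⟪(T ^ k) v, v⟫ = ⟪(T ^ k) w, w⟫) :
    v + w ∈ (cyclicSubspace T (v - w))ᗮ := by
  refine mem_orthogonal_cyclicSubspace_iff.2 fun k => ?_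
  have hcross : ⟪(T ^ k) v, w⟫ = ⟪(T ^ k) w, v⟫ := by rw [hT.pow k, real_inner_comm]
  simp only [map_sub, inner_sub_left, inner_add_right]
  linear_combination h k + hcross

theorem exists_isometry_commute_apply_eq [FiniteDimensional ℝ E] {T : E →ₗ[ℝ] E}
    (hT : T.IsSymmetric) {v w : E} (h : ∀ k : ℕ, ⟪(T ^ k) v, v⟫ = ⟪(T ^ k) w, w⟫) :
    ∃ R : E ≃ₗᵢ[ℝ] E, (∀ z, R (T z) = T (R z)) ∧ R v = w ∧
      ∀ z, (∀ k : ℕ, ⟪(T ^ k) v, z⟫ = ⟪(T ^ k) w, z⟫) → R z = z := by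
  set K := cyclicSubspace T (v - w)
  refine ⟨Kᗮ.reflection, reflection_apply_comm_of_isSymmetric hT
    (hT.orthogonalComplement_mem_invtSubmodule (cyclicSubspace_mem_invtSubmodule T _)),
    reflection_orthogonal_eq_of_sub_mem_of_add_mem (self_mem_cyclicSubspace T _)
      (add_mem_orthogonal_cyclicSubspace_sub hT h), fun z hz => ?_⟩
  refine Submodule.reflection_mem_subspace_eq_self (mem_orthogonal_cyclicSubspace_iff.2 fun k => ?_)
  rw [map_sub, inner_sub_left, hz k, sub_self]

theorem exists_isometry_intertwining [FiniteDimensional ℝ E] [FiniteDimensional ℝ F]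
    {T : E →ₗ[ℝ] E} {S : F →ₗ[ℝ] F} (hT : T.IsSymmetric) (hS : S.IsSymmetric)
    (h : T.charpoly = S.charpoly) :
    ∃ Φ : E ≃ₗᵢ[ℝ] F, ∀ z, Φ (T z) = S (Φ z) := by
  have hdim : Module.finrank ℝ F = Module.finrank ℝ E := by
    rw [← S.charpoly_natDegree, ← h, T.charpoly_natDegree]
  have heig := (hT.eigenvalues_eq_eigenvalues_iff rfl hS hdim).2 h
  let bT := hT.eigenvectorBasis rfl
  let bS := hS.eigenvectorBasis hdim
  let Φ := bT.equiv bS (Equiv.refl _)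
  have hbasis : Φ.toLinearMap ∘ₗ T = S ∘ₗ Φ.toLinearMap := by
    refine bT.toBasis.ext fun i => ?_
    simp [Φ, bT, bS, hT.apply_eigenvectorBasis, hS.apply_eigenvectorBasis, heig]
  exact ⟨Φ, LinearMap.congr_fun hbasis⟩

theorem map_pow_apply_of_intertwining {T : E →ₗ[ℝ] E} {S : F →ₗ[ℝ] F} {Φ : E ≃ₗᵢ[ℝ] F}
    (h : ∀ z, Φ (T z) = S (Φ z)) (k : ℕ) (z : E) : Φ ((T ^ k) z) = (S ^ k) (Φ z) := by
  simpa only [Module.End.coe_pow] using Function.Semiconj.iterate_right h k z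

theorem exists_isometry_of_moments_eq [FiniteDimensional ℝ E] [FiniteDimensional ℝ F] [Finite ι]
    {T : E →ₗ[ℝ] E} {S : F →ₗ[ℝ] F} (hT : T.IsSymmetric) (hS : S.IsSymmetric)
    (h : T.charpoly = S.charpoly) {x : ι → E} {y : ι → F}
    (hxy : ∀ i j (k : ℕ), ⟪(T ^ k) (x i), x j⟫ = ⟪(S ^ k) (y i), y j⟫) :
    ∃ Φ : E ≃ₗᵢ[ℝ] F, (∀ z, Φ (T z) = S (Φ z)) ∧ ∀ i, Φ (x i) = y i := by
  have := Fintype.ofFinite ι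
  suffices key : ∀ s : Finset ι, ∃ Φ : E ≃ₗᵢ[ℝ] F,
      (∀ z, Φ (T z) = S (Φ z)) ∧ ∀ i ∈ s, Φ (x i) = y i by
    simpa using key Finset.univ
  intro s
  induction s using Finset.cons_induction with
  | empty => simpa using exists_isometry_intertwining hT hS h
  | cons a s _ ih =>
    obtain ⟨Φ, hΦ, hs⟩ := ih
    have hmoment (i : ι) (k : ℕ) : ⟪(S ^ k) (Φ (x a)), Φ (x i)⟫ = ⟪(S ^ k) (y a), y i⟫ := by
      rw [← map_pow_apply_of_intertwining hΦ, Φ.inner_map_map, hxy]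
    obtain ⟨R, hR, hRa, hfix⟩ := exists_isometry_commute_apply_eq hS (hmoment a)
    refine ⟨Φ.trans R, fun z => by simp [hΦ, hR], fun i hi => ?_⟩
    obtain rfl | hi := Finset.mem_cons.1 hi
    · exact hRa
    · rw [LinearIsometryEquiv.trans_apply, hs i hi]
      refine hfix (y i) fun k => ?_
      rw [← hmoment i k, hs i hi]

variable {n : Type*} [Fintype n] [DecidableEq n]

theorem exists_orthogonal_matrix_mulVec_eq (Φ : EuclideanSpace ℝ n ≃ₗᵢ[ℝ] EuclideanSpace ℝ n) :
    ∃ Q ∈ orthogonalGroup n ℝ, ∀ v, Q *ᵥ v = WithLp.ofLp (Φ (WithLp.toLp 2 v)) := by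
  let basis := EuclideanSpace.basisFun n ℝ
  refine ⟨_, Φ.toMatrix_mem_unitaryGroup basis basis, fun v => ?_⟩
  exact LinearMap.toMatrix_mulVec_repr basis.toBasis basis.toBasis Φ.toLinearMap (WithLp.toLp 2 v)

theorem exists_orthogonal_of_walkSeries_eq [Finite ι] {A B : Matrix n n ℝ} (hA : A.IsSymm)
    (hB : B.IsSymm) (h : A.charpoly = B.charpoly) {x y : ι → n → ℝ}
    (hxy : ∀ i j, walkSeries A (x i) (x j) = walkSeries B (y i) (y j)) :
    ∃ Q : Matrix n n ℝ, Qᵀ * Q = 1 ∧ Q * B = A * Q ∧ ∀ i, Q *ᵥ y i = x i := by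
  have hsymm {M : Matrix n n ℝ} (hM : M.IsSymm) : M.toEuclideanLin.IsSymmetric :=
    isSymmetric_toEuclideanLin_iff.2 (by rwa [IsHermitian, conjTranspose_eq_transpose_of_trivial])
  have hchar (M : Matrix n n ℝ) : M.toEuclideanLin.charpoly = M.charpoly := by
    change (toLpLin 2 2 M).charpoly = _
    rw [toLpLin_eq_toLin, charpoly_toLin]
  have hinner (M : Matrix n n ℝ) (k : ℕ) (u v : n → ℝ) :
      ⟪(M.toEuclideanLin ^ k) (WithLp.toLp 2 u), WithLp.toLp 2 v⟫ =
        PowerSeries.coeff k (walkSeries M v u) := by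
    rw [show M.toEuclideanLin ^ k = (M ^ k).toEuclideanLin from (toLpLin_pow 2 M k).symm,
      toLpLin_toLp, EuclideanSpace.inner_toLp_toLp, star_trivial, toLin'_apply, coeff_walkSeries]
  obtain ⟨Φ, hΦ, hyx⟩ := exists_isometry_of_moments_eq (hsymm hB) (hsymm hA)
    (by rw [hchar, hchar, h]) (x := fun i => WithLp.toLp 2 (y i))
    (y := fun i => WithLp.toLp 2 (x i)) fun i j k => by rw [hinner, hinner, hxy]
  obtain ⟨Q, hQ, hQΦ⟩ := exists_orthogonal_matrix_mulVec_eq Φ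
  refine ⟨Q, (mem_orthogonalGroup_iff' n ℝ).1 hQ, ?_, fun i => by rw [hQΦ, hyx]⟩
  refine ext_of_mulVec_single fun i => ?_
  rw [← mulVec_mulVec, ← mulVec_mulVec, hQΦ, hQΦ]
  simpa only [toLpLin_toLp, ofLp_toLpLin, toLin'_apply] using
    congrArg WithLp.ofLp (hΦ (WithLp.toLp 2 (Pi.single i 1)))

end Reflection

theorem rooted_genCospectral_exists_regular_orthogonal_general
    {V : Type} [Fintype V] [DecidableEq V] {A B : Matrix V V ℝ} (hA : A.IsSymm) (hB : B.IsSymm)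
    (b c : V → ℝ) (hborder : GenCospectral (border A b) (border B c)) (h : GenCospectral A B) :
    ∃ Q : Matrix V V ℝ,
      Qᵀ * Q = 1 ∧ (Q *ᵥ fun _ => (1 : ℝ)) = (fun _ => 1) ∧
        Qᵀ * A * Q = B ∧ Qᵀ *ᵥ b = c := by
  have hone_one : walkSeries A 1 1 = walkSeries B 1 1 := h.walkSeries_one_one_eq
  have hself : walkSeries A b b = walkSeries B c c :=
    walkSeries_self_eq_of_border_charpoly_eq h.1 hborder.1
  have hone_vec : walkSeries A 1 b = walkSeries B 1 c := h.walkSeries_one_border_eq hA hB hborder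
  have hvec_one : walkSeries A b 1 = walkSeries B c 1 := by
    rw [walkSeries_comm hA, hone_vec, walkSeries_comm hB]
  obtain ⟨Q, hQ, hQB, hQv⟩ := exists_orthogonal_of_walkSeries_eq hA hB h.1
    (x := ![1, b]) (y := ![1, c]) (by simp [Fin.forall_fin_two, *])
  have hQc : Q *ᵥ c = b := hQv 1
  refine ⟨Q, hQ, hQv 0, ?_, ?_⟩
  · rw [Matrix.mul_assoc, ← hQB, ← Matrix.mul_assoc, hQ, Matrix.one_mul]
  · rw [← hQc, mulVec_mulVec, hQ, one_mulVec]

/-- If the rooted graphs `(G, uₙ)` and `(H, vₙ)` are generalized cospectral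
(i.e. `G, H` are generalized cospectral and `G - uₙ, H - vₙ` are generalized cospectral), then
there is a regular orthogonal matrix `Q` with `Qᵀ A₁ Q = B₁` and `Qᵀ b = c`. -/
theorem rooted_genCospectral_exists_regular_orthogonal
    {m : ℕ} (A₁ B₁ : Matrix (Fin m) (Fin m) ℝ) (b c : Fin m → ℝ)
    (hA₁ : A₁.IsAdjMatrix) (hB₁ : B₁.IsAdjMatrix)
    (hb : ∀ i, b i = 0 ∨ b i = 1) (hc : ∀ i, c i = 0 ∨ c i = 1)
    (hGH : GenCospectral (border A₁ b) (border B₁ c))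
    (hdel : GenCospectral A₁ B₁) :
    ∃ Q : Matrix (Fin m) (Fin m) ℝ,
      Qᵀ * Q = 1 ∧ (Q *ᵥ fun _ => (1 : ℝ)) = (fun _ => 1) ∧
        Qᵀ * A₁ * Q = B₁ ∧ Qᵀ *ᵥ b = c :=
  rooted_genCospectral_exists_regular_orthogonal_general hA₁.symm hB₁.symm b c hGH hdel
end
end

section
/- Let G and H be two n-vertex graphs and let b, c ∈ {0,1}ⁿ. If (1) the overgraphs G+b and H+c are generalized cospectral, and (2) G and H are generalized cospectral, then there exists an n×n real orthogonal matrix Q such that Qᵀ A(G) Q = A(H), Qᵀ e = e, and Qᵀ b = c. -/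
open Matrix

noncomputable section

/-!
For a symmetric matrix `A` and vectors `x`, `y`, put `W_A(x, y) = ∑ k, (xᵀ A ^ k y) X ^ k`. Once the
characteristic polynomial of `A` is known, that of the complement determines `W(e, e)` by the matrix
determinant lemma, that of the overgraph determines `W(b, b)` by a Schur complement, and that of the
complement of the overgraph then determines `(1 + X W(e, b)) ^ 2`, hence `W(e, b)`, because the
square root has constant term `1`. Separating the eigenvalues by interpolation, equality of these
series means that in every common eigenspace the projections of `e` and `b` have the same Gram
matrix as those of `e` and `c`. An isometry between the eigenspaces therefore carries one pair to
the other, and together these isometries form an orthogonal matrix intertwining `A` and `B`.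
-/

section GramMatrix

variable {𝕜 E F ι n : Type*} [RCLike 𝕜]

theorem norm_linearCombination_eq_of_gram_eq [SeminormedAddCommGroup E] [InnerProductSpace 𝕜 E]
    [SeminormedAddCommGroup F] [InnerProductSpace 𝕜 F] {x : ι → E} {y : ι → F}
    (h : gram 𝕜 x = gram 𝕜 y) (a : ι →₀ 𝕜) :
    ‖Finsupp.linearCombination 𝕜 x a‖ = ‖Finsupp.linearCombination 𝕜 y a‖ := by
  have hinner (i j : ι) : inner 𝕜 (x i) (x j) = inner 𝕜 (y i) (y j) := congrFun₂ h i j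
  rw [← sq_eq_sq₀ (norm_nonneg _) (norm_nonneg _), ← RCLike.ofReal_inj (K := 𝕜)]
  push_cast
  simp only [← inner_self_eq_norm_sq_to_K, Finsupp.linearCombination_apply, Finsupp.sum_inner,
    Finsupp.inner_sum, inner_smul_left, inner_smul_right, hinner]

theorem exists_linearIsometryEquiv_of_gram_eq [NormedAddCommGroup E] [InnerProductSpace 𝕜 E]
    [FiniteDimensional 𝕜 E] {x y : ι → E} (h : gram 𝕜 x = gram 𝕜 y) :
    ∃ f : E ≃ₗᵢ[𝕜] E, ∀ i, f (x i) = y i := by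
  let a := Finsupp.linearCombination 𝕜 x
  let b := Finsupp.linearCombination 𝕜 y
  have hker : a.ker ≤ b.ker := fun c hc => by
    rw [LinearMap.mem_ker, ← norm_eq_zero] at hc ⊢
    rwa [← norm_linearCombination_eq_of_gram_eq h]
  let g : a.range →ₗ[𝕜] E := a.ker.liftQ b hker ∘ₗ a.quotKerEquivRange.symm
  have hg (c : ι →₀ 𝕜) : g (a.rangeRestrict c) = b c := by
    have : a.quotKerEquivRange.symm (a.rangeRestrict c) = a.ker.mkQ c :=
      a.quotKerEquivRange_symm_apply_image c _
    simp [g, this]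
  let L : a.range →ₗᵢ[𝕜] E :=
    { g with
      norm_map' := fun z => by
        obtain ⟨c, rfl⟩ := a.surjective_rangeRestrict z
        exact (congrArg norm (hg c)).trans (norm_linearCombination_eq_of_gram_eq h c).symm }
  refine ⟨L.extend.toLinearIsometryEquiv rfl, fun i => ?_⟩
  have hx : x i = (a.rangeRestrict (Finsupp.single i 1) : E) := by simp [a]
  rw [LinearIsometry.toLinearIsometryEquiv_apply, hx, LinearIsometry.extend_apply]
  exact (hg _).trans (by simp [b])

theorem exists_mem_unitaryGroup_mulVec_eq [Fintype n] [DecidableEq n] {x y : ι → n → 𝕜}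
    (h : ∀ i j, star (x i) ⬝ᵥ x j = star (y i) ⬝ᵥ y j) :
    ∃ U ∈ unitaryGroup n 𝕜, ∀ i, U *ᵥ x i = y i := by
  have hgram : gram 𝕜 (fun i => WithLp.toLp 2 (x i)) = gram 𝕜 (fun i => WithLp.toLp 2 (y i)) := by
    ext i j
    simpa [EuclideanSpace.inner_eq_star_dotProduct, dotProduct_comm] using h i j
  obtain ⟨f, hf⟩ := exists_linearIsometryEquiv_of_gram_eq hgram
  let e := EuclideanSpace.basisFun n 𝕜
  refine ⟨_, f.toMatrix_mem_unitaryGroup e e, fun i => ?_⟩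
  have hrepr := LinearMap.toMatrix_mulVec_repr e.toBasis e.toBasis
    f.toLinearEquiv.toLinearMap (WithLp.toLp 2 (x i))
  simpa [e, hf] using! hrepr

end GramMatrix

section FiberBlockDiagonal

variable {n o α : Type*} [DecidableEq o]

/-- The block diagonal matrix whose blocks are indexed by the fibers of `d`. Unlike
`Matrix.blockDiagonal'`, it keeps the index type `n` instead of the sigma type of the fibers. -/
def fiberBlockDiagonal [Zero α] (d : n → o)
    (M : ∀ l, Matrix {i // d i = l} {i // d i = l} α) : Matrix n n α :=
  of fun i j => if h : d j = d i then M (d i) ⟨i, rfl⟩ ⟨j, h⟩ else 0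

theorem star_fiberBlockDiagonal [AddMonoid α] [StarAddMonoid α] (d : n → o)
    (M : ∀ l, Matrix {i // d i = l} {i // d i = l} α) :
    star (fiberBlockDiagonal d M) = fiberBlockDiagonal d fun l => star (M l) := by
  ext i j
  by_cases h : d i = d j
  · have hM : ∀ l (hi : d i = l) (hj : d j = l),
        M (d j) ⟨j, rfl⟩ ⟨i, h⟩ = M l ⟨j, hj⟩ ⟨i, hi⟩ := by
      rintro _ _ rfl
      rfl
    simp [fiberBlockDiagonal, star_apply, h, hM (d i) rfl h.symm]
  · simp [fiberBlockDiagonal, star_apply, h, Ne.symm h]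

theorem fiberBlockDiagonal_mulVec [Fintype n] [NonUnitalNonAssocSemiring α] (d : n → o)
    (M : ∀ l, Matrix {i // d i = l} {i // d i = l} α) (x : n → α) (l : o) (i : {i // d i = l}) :
    (fiberBlockDiagonal d M *ᵥ x) i = (M l *ᵥ fun j => x j) i := by
  obtain ⟨i, rfl⟩ := i
  simp only [fiberBlockDiagonal, mulVec, dotProduct, of_apply, dite_mul, zero_mul, Finset.sum_dite,
    Finset.sum_const_zero, add_zero]
  exact Fintype.sum_equiv (Equiv.subtypeEquivRight (by simp)) _ _ fun _ => rfl

theorem commute_fiberBlockDiagonal_diagonal [Fintype n] [DecidableEq n] [DecidableEq α]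
    [NonUnitalCommSemiring α] (d : n → α) (M : ∀ l, Matrix {i // d i = l} {i // d i = l} α) :
    Commute (fiberBlockDiagonal d M) (diagonal d) := by
  ext i j
  rw [mul_diagonal, diagonal_mul, mul_comm]
  by_cases h : d j = d i
  · rw [h]
  · simp [fiberBlockDiagonal, h]

theorem fiberBlockDiagonal_mem_unitaryGroup [Fintype n] [DecidableEq n] [CommRing α] [StarRing α]
    (d : n → o) {M : ∀ l, Matrix {i // d i = l} {i // d i = l} α}
    (hM : ∀ l, M l ∈ unitaryGroup {i // d i = l} α) :
    fiberBlockDiagonal d M ∈ unitaryGroup n α := by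
  rw [mem_unitaryGroup_iff', star_fiberBlockDiagonal, ext_iff_mulVec]
  intro x
  ext i
  rw [← mulVec_mulVec, one_mulVec, fiberBlockDiagonal_mulVec d _ _ _ ⟨i, rfl⟩]
  simp only [fiberBlockDiagonal_mulVec]
  rw [mulVec_mulVec, mem_unitaryGroup_iff'.mp (hM _), one_mulVec]

theorem exists_mem_unitaryGroup_commute_diagonal_mulVec_eq {𝕜 ι : Type*} [RCLike 𝕜]
    [DecidableEq 𝕜] [Fintype n] [DecidableEq n] (d : n → 𝕜) {x y : ι → n → 𝕜}
    (h : ∀ i j l, ∑ m with d m = l, star (x i m) * x j m =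
      ∑ m with d m = l, star (y i m) * y j m) :
    ∃ U ∈ unitaryGroup n 𝕜, Commute U (diagonal d) ∧ ∀ i, U *ᵥ x i = y i := by
  have hfiber (l : 𝕜) : ∃ M ∈ unitaryGroup {m // d m = l} 𝕜,
      ∀ i, (M *ᵥ fun m => x i m) = fun m : {m // d m = l} => y i m := by
    refine exists_mem_unitaryGroup_mulVec_eq fun i j => ?_
    simpa [dotProduct, Finset.sum_subtype _ (p := fun m => d m = l)] using h i j l
  choose M hM hMx using hfiber
  refine ⟨fiberBlockDiagonal d M, fiberBlockDiagonal_mem_unitaryGroup d hM,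
    commute_fiberBlockDiagonal_diagonal d M, fun i => funext fun m => ?_⟩
  rw [fiberBlockDiagonal_mulVec d M _ _ ⟨m, rfl⟩, hMx]

end FiberBlockDiagonal

open scoped PowerSeries

section WalkGenFun

variable {V R : Type*} [Fintype V] [DecidableEq V] [CommRing R]

/-- The walk generating function `∑ k, (xᵀ A ^ k y) X ^ k`, whose `k`-th coefficient counts the
walks of length `k` weighted by `x` at the start and `y` at the end. -/
def walkGenFun (A : Matrix V V R) (x y : V → R) : R⟦X⟧ :=
  PowerSeries.mk fun k => x ⬝ᵥ A ^ k *ᵥ y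

/-- The vector of power series `∑ k, (A ^ k y) X ^ k = (1 - X A)⁻¹ y`. -/
def walkVec (A : Matrix V V R) (y : V → R) : V → R⟦X⟧ :=
  fun i => PowerSeries.mk fun k => (A ^ k *ᵥ y) i

/-- The matrix `1 - X A` whose determinant is `Matrix.charpolyRev`, with power series entries so
that it is invertible. -/
def revCharmatrix (A : Matrix V V R) : Matrix V V R⟦X⟧ :=
  1 - (PowerSeries.X : R⟦X⟧) • A.map PowerSeries.C

theorem coeff_walkVec (A : Matrix V V R) (y : V → R) (k : ℕ) (i : V) :
    PowerSeries.coeff k (walkVec A y i) = (A ^ k *ᵥ y) i :=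
  PowerSeries.coeff_mk _ _

theorem dotProduct_walkVec (A : Matrix V V R) (x y : V → R) :
    (PowerSeries.C ∘ x) ⬝ᵥ walkVec A y = walkGenFun A x y := by
  ext k
  simp [dotProduct, coeff_walkVec, walkGenFun]

theorem walkGenFun_comm {A : Matrix V V R} (hA : A.IsSymm) (x y : V → R) :
    walkGenFun A x y = walkGenFun A y x := by
  ext k
  rw [walkGenFun, walkGenFun, PowerSeries.coeff_mk, PowerSeries.coeff_mk, dotProduct_mulVec,
    dotProduct_comm, ← mulVec_transpose, (hA.pow k).eq]

theorem walkVec_eq (A : Matrix V V R) (y : V → R) :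
    walkVec A y =
      PowerSeries.C ∘ y + (PowerSeries.X : R⟦X⟧) • (A.map PowerSeries.C *ᵥ walkVec A y) := by
  ext i (_ | k)
  · simp [coeff_walkVec]
  · rw [coeff_walkVec, pow_succ', ← mulVec_mulVec]
    simp [mulVec, dotProduct, coeff_walkVec, PowerSeries.coeff_succ_X_mul]

theorem revCharmatrix_mulVec_walkVec (A : Matrix V V R) (y : V → R) :
    revCharmatrix A *ᵥ walkVec A y = PowerSeries.C ∘ y := by
  rw [revCharmatrix, sub_mulVec, one_mulVec, smul_mulVec, sub_eq_iff_eq_add, ← walkVec_eq]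

theorem coe_charpolyRev (A : Matrix V V R) :
    (A.charpolyRev : R⟦X⟧) = (revCharmatrix A).det := by
  rw [charpolyRev, ← Polynomial.coeToPowerSeries.ringHom_apply, RingHom.map_det]
  congr 1
  ext i j : 1
  simp [revCharmatrix, Matrix.one_apply, apply_ite, -Polynomial.X_mul_C]

theorem isUnit_charpolyRev (A : Matrix V V R) : IsUnit (A.charpolyRev : R⟦X⟧) := by
  rw [PowerSeries.isUnit_iff_constantCoeff, Polynomial.constantCoeff_coe,
    Polynomial.coeff_zero_eq_eval_zero, eval_charpolyRev]
  exact isUnit_one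

theorem revCharmatrix_mulVec_injective (A : Matrix V V R) :
    Function.Injective (revCharmatrix A).mulVec := by
  refine mulVec_injective_of_isUnit ?_
  rw [isUnit_iff_isUnit_det, ← coe_charpolyRev]
  exact isUnit_charpolyRev A

theorem charpolyRev_eq_of_charpoly_eq {A B : Matrix V V R} (h : A.charpoly = B.charpoly) :
    A.charpolyRev = B.charpolyRev := by
  rw [← reverse_charpoly, h, reverse_charpoly]

theorem det_add_vecMulVec_of_mulVec_eq {M : Matrix V V R} {u p : V → R} (h : M *ᵥ p = u)
    (v : V → R) : (M + vecMulVec u v).det = M.det * (1 + v ⬝ᵥ p) := by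
  rw [← h, ← mul_vecMulVec, ← mul_one_add, det_mul, vecMulVec_eq Unit,
    det_one_add_replicateCol_mul_replicateRow]

theorem det_fromBlocks_replicateCol_replicateRow {M : Matrix V V R} {u p : V → R}
    (h : M *ᵥ p = u) (v : V → R) (s : R) :
    (fromBlocks M (replicateCol Unit u) (replicateRow Unit v) (of fun _ _ => s)).det =
      M.det * (s - v ⬝ᵥ p) := by
  have hfactor : fromBlocks M (replicateCol Unit u) (replicateRow Unit v) (of fun _ _ => s) =
      fromBlocks M 0 (replicateRow Unit v) (of fun _ _ => s - v ⬝ᵥ p) *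
        fromBlocks 1 (replicateCol Unit p) 0 1 := by
    rw [fromBlocks_multiply, ← h, replicateCol_mulVec]
    congr 1 <;> ext <;> simp [dotProduct, Matrix.mul_apply]
  simp [hfactor]

theorem charpolyRev_sub_vecMulVec (A : Matrix V V R) (x y : V → R) :
    ((A - vecMulVec x y).charpolyRev : R⟦X⟧) =
      (A.charpolyRev : R⟦X⟧) * (1 + PowerSeries.X * walkGenFun A y x) := by
  have hsub : revCharmatrix (A - vecMulVec x y) = revCharmatrix A +
      vecMulVec ((PowerSeries.X : R⟦X⟧) • (PowerSeries.C ∘ x)) (PowerSeries.C ∘ y) := by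
    ext i j : 1
    simp only [revCharmatrix, vecMulVec_apply, Matrix.sub_apply, Matrix.add_apply,
      Matrix.smul_apply, map_apply, map_sub, map_mul, smul_eq_mul, Pi.smul_apply,
      Function.comp_apply]
    ring
  rw [coe_charpolyRev, coe_charpolyRev, hsub, ← revCharmatrix_mulVec_walkVec, ← mulVec_smul,
    det_add_vecMulVec_of_mulVec_eq rfl, dotProduct_smul, dotProduct_walkVec, smul_eq_mul]

theorem walkGenFun_eq_of_charpoly_sub_vecMulVec_eq {A B : Matrix V V R} {x y u v : V → R}
    (h : A.charpoly = B.charpoly)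
    (hsub : (A - vecMulVec x y).charpoly = (B - vecMulVec u v).charpoly) :
    walkGenFun A y x = walkGenFun B v u := by
  have hrev := congrArg ((↑) : Polynomial R → R⟦X⟧) (charpolyRev_eq_of_charpoly_eq hsub)
  rw [charpolyRev_sub_vecMulVec, charpolyRev_sub_vecMulVec, charpolyRev_eq_of_charpoly_eq h,
    (isUnit_charpolyRev B).mul_right_inj, add_right_inj] at hrev
  exact PowerSeries.X_mul_cancel hrev

end WalkGenFun

section UnitarySimilarity

theorem sum_filter_eq_of_sum_pow_mul_eq {ι K : Type*} [Fintype ι] [Field K] [DecidableEq K]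
    (d r s : ι → K) (h : ∀ k : ℕ, ∑ i, d i ^ k * r i = ∑ i, d i ^ k * s i) (l : K) :
    ∑ i with d i = l, r i = ∑ i with d i = l, s i := by
  have heval (p : Polynomial K) : ∑ i, p.eval (d i) * r i = ∑ i, p.eval (d i) * s i := by
    simp only [Polynomial.eval_eq_sum_range, Finset.sum_mul, mul_assoc]
    rw [Finset.sum_comm, Finset.sum_comm (s := Finset.univ)]
    simp only [← Finset.mul_sum, h]
  let p := Lagrange.interpolate (Finset.univ.image d) id (Pi.single l 1)
  have hp (i : ι) : p.eval (d i) = if d i = l then 1 else 0 := by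
    rw [← Pi.single_apply]
    exact Lagrange.eval_interpolate_at_node _ Function.injective_id.injOn
      (Finset.mem_image_of_mem d (Finset.mem_univ i))
  simpa [hp, Finset.sum_filter] using heval p

variable {𝕜 ι n : Type*} [RCLike 𝕜] [Fintype n] [DecidableEq n]

theorem dotProduct_conjStarAlgAut_diagonal_pow_mulVec (U : unitaryGroup n 𝕜) (d x y : n → 𝕜)
    (k : ℕ) :
    star x ⬝ᵥ Unitary.conjStarAlgAut 𝕜 _ U (diagonal d) ^ k *ᵥ y =
      ∑ m, d m ^ k *
        (star ((star U : Matrix n n 𝕜) *ᵥ x) m * ((star U : Matrix n n 𝕜) *ᵥ y) m) := by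
  have hx : star x ᵥ* (U : Matrix n n 𝕜) = star ((star U : Matrix n n 𝕜) *ᵥ x) := by
    simp [star_mulVec, star_eq_conjTranspose]
  rw [← map_pow, Unitary.conjStarAlgAut_apply, diagonal_pow, ← mulVec_mulVec, ← mulVec_mulVec,
    dotProduct_mulVec, hx]
  simp only [dotProduct, mulVec_diagonal, Pi.pow_apply, mul_left_comm]

theorem exists_mem_unitaryGroup_of_charpoly_eq_of_walkGenFun_eq {A B : Matrix n n 𝕜}
    (hA : A.IsHermitian) (hB : B.IsHermitian) (hAB : A.charpoly = B.charpoly) {x y : ι → n → 𝕜}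
    (h : ∀ i j, walkGenFun A (star (x i)) (x j) = walkGenFun B (star (y i)) (y j)) :
    ∃ Q ∈ unitaryGroup n 𝕜, star Q * A * Q = B ∧ ∀ i, star Q *ᵥ x i = y i := by
  classical
  let U := hA.eigenvectorUnitary
  let W := hB.eigenvectorUnitary
  let d : n → 𝕜 := RCLike.ofReal ∘ hA.eigenvalues
  have hAU : A = Unitary.conjStarAlgAut 𝕜 _ U (diagonal d) := hA.spectral_theorem
  have hBW : B = Unitary.conjStarAlgAut 𝕜 _ W (diagonal d) := by
    simpa only [d, (hA.eigenvalues_eq_eigenvalues_iff hB).mpr hAB] using hB.spectral_theorem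
  obtain ⟨S, hS, hSd, hSx⟩ : ∃ S ∈ unitaryGroup n 𝕜, Commute S (diagonal d) ∧
      ∀ i, S *ᵥ (star U : Matrix n n 𝕜) *ᵥ x i = (star W : Matrix n n 𝕜) *ᵥ y i := by
    refine exists_mem_unitaryGroup_commute_diagonal_mulVec_eq d fun i j =>
      sum_filter_eq_of_sum_pow_mul_eq d _ _ fun k => ?_
    have hk := congrArg (PowerSeries.coeff k) (h i j)
    simp only [walkGenFun, PowerSeries.coeff_mk] at hk
    rwa [hAU, hBW, dotProduct_conjStarAlgAut_diagonal_pow_mulVec,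
      dotProduct_conjStarAlgAut_diagonal_pow_mulVec] at hk
  lift S to unitaryGroup n 𝕜 using hS
  have hSdS : Unitary.conjStarAlgAut 𝕜 _ S (diagonal d) = diagonal d := by
    rw [Unitary.conjStarAlgAut_apply, hSd.eq, mul_assoc, mem_unitaryGroup_iff.mp S.2, mul_one]
  let P : unitaryGroup n 𝕜 := W * S * star U
  have hPA : Unitary.conjStarAlgAut 𝕜 _ P A = B := by
    rw [hAU, ← Unitary.conjStarAlgAut_mul_apply, mul_assoc, Unitary.star_mul_self, mul_one,
      Unitary.conjStarAlgAut_mul_apply, hSdS, ← hBW]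
  have hPx (i : ι) : (P : Matrix n n 𝕜) *ᵥ x i = y i := by
    simp only [P, UnitaryGroup.mul_val, ← mulVec_mulVec, Unitary.coe_star, hSx]
    rw [mulVec_mulVec, mem_unitaryGroup_iff.mp W.2, one_mulVec]
  refine ⟨star (P : Matrix n n 𝕜), (star P).2, ?_, fun i => ?_⟩
  · simpa only [star_star, Unitary.conjStarAlgAut_apply] using hPA
  · rw [star_star, hPx]

end UnitarySimilarity

theorem eq_of_one_add_X_mul_sq_eq {R : Type*} [CommRing R] [IsDomain R] [NeZero (2 : R)]
    {f g : R⟦X⟧} (h : (1 + PowerSeries.X * f) ^ 2 = (1 + PowerSeries.X * g) ^ 2) : f = g := by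
  rcases sq_eq_sq_iff_eq_or_eq_neg.mp h with heq | hneg
  · exact PowerSeries.X_mul_cancel (add_left_cancel heq)
  · have htwo : (1 : R) = -1 := by simpa using congrArg PowerSeries.constantCoeff hneg
    exact absurd (by linear_combination htwo) (two_ne_zero (α := R))

section Overgraph

variable {V : Type} [Fintype V] [DecidableEq V]

theorem revCharmatrix_border (A : Matrix V V ℝ) (b : V → ℝ) :
    revCharmatrix (border A b) = fromBlocks (revCharmatrix A)
      (replicateCol Unit (-(PowerSeries.X : ℝ⟦X⟧) • (PowerSeries.C ∘ b)))
      (replicateRow Unit (-(PowerSeries.X : ℝ⟦X⟧) • (PowerSeries.C ∘ b))) (of fun _ _ => 1) := by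
  ext (i | i) (j | j) : 2 <;> simp [revCharmatrix, border, Matrix.one_apply]

theorem charpolyRev_border (A : Matrix V V ℝ) (b : V → ℝ) :
    ((border A b).charpolyRev : ℝ⟦X⟧) =
      (A.charpolyRev : ℝ⟦X⟧) * (1 - PowerSeries.X ^ 2 * walkGenFun A b b) := by
  have hsolve : revCharmatrix A *ᵥ (-(PowerSeries.X : ℝ⟦X⟧) • walkVec A b) =
      -(PowerSeries.X : ℝ⟦X⟧) • (PowerSeries.C ∘ b) := by
    rw [mulVec_smul, revCharmatrix_mulVec_walkVec]
  rw [coe_charpolyRev, coe_charpolyRev, revCharmatrix_border,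
    det_fromBlocks_replicateCol_replicateRow hsolve, smul_dotProduct, dotProduct_smul,
    dotProduct_walkVec, smul_eq_mul, smul_eq_mul]
  ring

theorem walkVec_border_inr (A : Matrix V V ℝ) (b : V → ℝ) (y : V ⊕ Unit → ℝ) :
    walkVec (border A b) y (Sum.inr ()) = PowerSeries.C (y (Sum.inr ())) +
      PowerSeries.X * ((PowerSeries.C ∘ b) ⬝ᵥ (walkVec (border A b) y ∘ Sum.inl)) := by
  have hinr := congrFun (walkVec_eq (border A b) y) (Sum.inr ())
  simpa [border, mulVec, dotProduct] using hinr

theorem walkVec_border_comp_inl (A : Matrix V V ℝ) (b : V → ℝ) (y : V ⊕ Unit → ℝ) :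
    walkVec (border A b) y ∘ Sum.inl = walkVec A (y ∘ Sum.inl) +
      (PowerSeries.X * walkVec (border A b) y (Sum.inr ())) • walkVec A b := by
  refine revCharmatrix_mulVec_injective A ?_
  have hblocks := revCharmatrix_mulVec_walkVec (border A b) y
  rw [revCharmatrix_border, fromBlocks_mulVec] at hblocks
  have hinl := congrArg (· ∘ Sum.inl) hblocks
  rw [Sum.elim_comp_inl, ← eq_sub_iff_add_eq] at hinl
  simp only [hinl, mulVec_add, mulVec_smul, revCharmatrix_mulVec_walkVec]
  ext i : 1
  simp [mulVec, dotProduct, mul_right_comm]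

theorem walkGenFun_border (A : Matrix V V ℝ) (b : V → ℝ) (x y : V ⊕ Unit → ℝ) :
    (walkGenFun (border A b) x y - walkGenFun A (x ∘ Sum.inl) (y ∘ Sum.inl)) *
        (1 - PowerSeries.X ^ 2 * walkGenFun A b b) =
      (PowerSeries.C (x (Sum.inr ())) + PowerSeries.X * walkGenFun A (x ∘ Sum.inl) b) *
        (PowerSeries.C (y (Sum.inr ())) + PowerSeries.X * walkGenFun A b (y ∘ Sum.inl)) := by
  let t := walkVec (border A b) y (Sum.inr ())
  have hdot (u : V → ℝ) : (PowerSeries.C ∘ u) ⬝ᵥ (walkVec (border A b) y ∘ Sum.inl) =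
      walkGenFun A u (y ∘ Sum.inl) + PowerSeries.X * t * walkGenFun A u b := by
    rw [walkVec_border_comp_inl, dotProduct_add, dotProduct_smul, dotProduct_walkVec,
      dotProduct_walkVec, smul_eq_mul]
  have ht : t = PowerSeries.C (y (Sum.inr ())) + PowerSeries.X *
      (walkGenFun A b (y ∘ Sum.inl) + PowerSeries.X * t * walkGenFun A b b) := by
    rw [← hdot, ← walkVec_border_inr]
  have hsplit : walkGenFun (border A b) x y = walkGenFun A (x ∘ Sum.inl) (y ∘ Sum.inl) +
      PowerSeries.X * t * walkGenFun A (x ∘ Sum.inl) b + PowerSeries.C (x (Sum.inr ())) * t := by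
    rw [← hdot, ← dotProduct_walkVec]
    simp [dotProduct, t]
  rw [hsplit]
  linear_combination
    (PowerSeries.C (x (Sum.inr ())) + PowerSeries.X * walkGenFun A (x ∘ Sum.inl) b) * ht

theorem charpoly_sub_vecMulVec_one_eq_of_charpoly_complMat_eq {A B : Matrix V V ℝ}
    (h : (complMat A).charpoly = (complMat B).charpoly) :
    (A - vecMulVec 1 1).charpoly = (B - vecMulVec 1 1).charpoly := by
  refine Polynomial.funext fun r => ?_
  have heval (M : Matrix V V ℝ) : (M - vecMulVec 1 1).charpoly.eval r =
      (-1) ^ Fintype.card V * (complMat M).charpoly.eval (-(r + 1)) := by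
    rw [eval_charpoly, eval_charpoly, ← det_neg]
    congr 1 -- `r - (M - J) = -(-(r + 1) - (J - 1 - M))`
    ext i j
    simp only [complMat, scalar_apply, diagonal_apply, one_apply, Matrix.sub_apply,
      Matrix.neg_apply, of_apply, vecMulVec_apply, Pi.one_apply]
    split_ifs <;> ring
  rw [heval, heval, h]

theorem GenCospectral.walkGenFun_one_eq {A B : Matrix V V ℝ} (h : GenCospectral A B) :
    walkGenFun A 1 1 = walkGenFun B 1 1 :=
  walkGenFun_eq_of_charpoly_sub_vecMulVec_eq h.1
    (charpoly_sub_vecMulVec_one_eq_of_charpoly_complMat_eq h.2)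

theorem walkGenFun_self_eq_of_charpoly_border_eq {A B : Matrix V V ℝ} {b c : V → ℝ}
    (h : A.charpoly = B.charpoly) (hborder : (border A b).charpoly = (border B c).charpoly) :
    walkGenFun A b b = walkGenFun B c c := by
  have hrev := congrArg ((↑) : Polynomial ℝ → ℝ⟦X⟧) (charpolyRev_eq_of_charpoly_eq hborder)
  rw [charpolyRev_border, charpolyRev_border, charpolyRev_eq_of_charpoly_eq h,
    (isUnit_charpolyRev B).mul_right_inj, sub_right_inj] at hrev
  exact mul_left_cancel₀ (pow_ne_zero 2 PowerSeries.X_ne_zero) hrev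

theorem GenCospectral.walkGenFun_one_left_eq {A B : Matrix V V ℝ} {b c : V → ℝ} (hA : A.IsSymm)
    (hB : B.IsSymm) (hover : GenCospectral (border A b) (border B c)) (h : GenCospectral A B) :
    walkGenFun A 1 b = walkGenFun B 1 c := by
  have hAb := walkGenFun_border A b 1 1
  have hBc := walkGenFun_border B c 1 1
  simp only [Pi.one_comp, Pi.one_apply, map_one] at hAb hBc
  rw [hover.walkGenFun_one_eq, h.walkGenFun_one_eq,
    walkGenFun_self_eq_of_charpoly_border_eq h.1 hover.1, hBc, walkGenFun_comm hA b,
    walkGenFun_comm hB c, ← sq, ← sq] at hAb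
  exact (eq_of_one_add_X_mul_sq_eq hAb).symm

end Overgraph

theorem overgraph_genCospectral_exists_orthogonal_general {V : Type} [Fintype V] [DecidableEq V]
    {A B : Matrix V V ℝ} {b c : V → ℝ} (hA : A.IsSymm) (hB : B.IsSymm)
    (hover : GenCospectral (border A b) (border B c)) (hGH : GenCospectral A B) :
    ∃ Q : Matrix V V ℝ, Qᵀ * Q = 1 ∧ Qᵀ * A * Q = B ∧
      (Qᵀ *ᵥ fun _ => (1 : ℝ)) = (fun _ => 1) ∧ Qᵀ *ᵥ b = c := by
  have hbc : walkGenFun A b b = walkGenFun B c c :=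
    walkGenFun_self_eq_of_charpoly_border_eq hGH.1 hover.1
  have hone : walkGenFun A 1 b = walkGenFun B 1 c := hover.walkGenFun_one_left_eq hA hB hGH
  have hone' : walkGenFun A b 1 = walkGenFun B c 1 := by
    rw [walkGenFun_comm hA, hone, walkGenFun_comm hB]
  obtain ⟨Q, hQ, hQA, hQx⟩ := exists_mem_unitaryGroup_of_charpoly_eq_of_walkGenFun_eq
    (A := A) (B := B) (x := ![1, b]) (y := ![1, c])
    (by rwa [IsHermitian, conjTranspose_eq_transpose_of_trivial])
    (by rwa [IsHermitian, conjTranspose_eq_transpose_of_trivial]) hGH.1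
    (by simp [Fin.forall_fin_two, hGH.walkGenFun_one_eq, hone, hone', hbc])
  have hstar : star Q = Qᵀ := conjTranspose_eq_transpose_of_trivial Q
  rw [mem_unitaryGroup_iff'] at hQ
  rw [hstar] at hQ hQA hQx
  exact ⟨Q, hQ, hQA, hQx 0, hQx 1⟩

/-- Proposition 5. If the overgraphs `G + b` and `H + c` are generalized
cospectral and `G` and `H` are generalized cospectral, then there is an orthogonal matrix `Q`
with `Qᵀ A(G) Q = A(H)`, `Qᵀ e = e` and `Qᵀ b = c`. -/
theorem overgraph_genCospectral_exists_orthogonal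
    {n : ℕ} (A B : Matrix (Fin n) (Fin n) ℝ) (b c : Fin n → ℝ)
    (hA : A.IsAdjMatrix) (hB : B.IsAdjMatrix)
    (hb : ∀ i, b i = 0 ∨ b i = 1) (hc : ∀ i, c i = 0 ∨ c i = 1)
    (hover : GenCospectral (border A b) (border B c))
    (hGH : GenCospectral A B) :
    ∃ Q : Matrix (Fin n) (Fin n) ℝ,
      Qᵀ * Q = 1 ∧ Qᵀ * A * Q = B ∧
        (Qᵀ *ᵥ fun _ => (1 : ℝ)) = (fun _ => 1) ∧ Qᵀ *ᵥ b = c :=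
  overgraph_genCospectral_exists_orthogonal_general hA.symm hB.symm hover hGH
end
end

section
/- Let G be a graph on n ≥ 3 vertices. If there exists a vertex u of G such that the vertex-deleted subgraph G−u is controllable, then G is reconstructible. -/
open Matrix

open scoped Classical

noncomputable section

/-- The real adjacency matrix of a simple graph. -/
def adjMat {V : Type} [Fintype V] (G : SimpleGraph V) : Matrix V V ℝ :=
  Matrix.of fun i j => if G.Adj i j then 1 else 0

/-- The walk matrix `W(G) = [e, Ae, …, A^{m-1}e]` of a square matrix `A`
(`m` = number of rows). -/
def walkMatrix {V : Type} [Fintype V] [DecidableEq V] (A : Matrix V V ℝ) :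
    Matrix V (Fin (Fintype.card V)) ℝ :=
  Matrix.of fun i j => (A ^ (j : ℕ) *ᵥ fun _ => (1 : ℝ)) i

/-- A graph `G` is reconstructible if every graph with the same deck (i.e. every graph `H`
admitting a bijection `σ` of the vertices such that `G - v ≅ H - σ v` for all `v`) is
isomorphic to `G`. -/
def Reconstructible {n : ℕ} (G : SimpleGraph (Fin n)) : Prop :=
  ∀ H : SimpleGraph (Fin n),
    (∃ σ : Equiv.Perm (Fin n),
      ∀ v : Fin n,
        Nonempty ((G.induce {w : Fin n | w ≠ v}) ≃g (H.induce {w : Fin n | w ≠ σ v}))) →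
    Nonempty (G ≃g H)

/-!
Let `χ` be the characteristic polynomial of `G`, let `y_v` be the numerator (over `χ`) of the
generating function of the walks starting at `v`, and let `N = ∑ v, y_v`. Since `N` is a difference
of two characteristic polynomials, the fact that `∑ v, χ(G - v)` is the derivative of `χ` makes
`∑ v, N(G - v)` the derivative of `N`, so the deck determines `χ` and `N` up to additive constants.
The constant of `N` is fixed by `y_v ^ 2 = N ⋅ χ(G - v) - N(G - v) ⋅ χ`: comparing `G` with a
reconstruction, whose `N` differs by `d`, the degrees of the polynomials involved force twice the
difference of the `y_v` to be `d` for every `v`. Summing over `v` gives `2 d = n d`, so for `n ≠ 2`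
we get `d = 0` and all `y_v` agree. Finally `y_u - χ(G - u)` is the sum of the walk numerators of
`G - u` over the neighbours of `u`. When `G - u` is controllable its walk numerators are linearly
independent over `ℝ`, and the neighbourhood of `u` is recovered.
-/

open Polynomial

section VertexDeletion

variable {V S : Type*}

/-- The principal submatrix obtained by deleting row and column `v`; for an adjacency matrix it is
the adjacency matrix of `G - v`. -/
def deleteVertex (A : Matrix V V S) (v : V) :
    Matrix {w : V | w ≠ v} {w : V | w ≠ v} S :=
  A.submatrix (↑) (↑)

/-- Row `v` without its diagonal entry; for an adjacency matrix it is the indicator vector of the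
neighbourhood of `v` among the vertices of `G - v`. -/
def deletedRow (A : Matrix V V S) (v : V) : {w : V | w ≠ v} → S :=
  fun w => A v w

/-- The vector on `V` that vanishes at `v` and agrees with `f` elsewhere. -/
def extendZero [Zero S] {v : V} (f : {w : V | w ≠ v} → S) : V → S :=
  Function.extend (↑) f 0

@[simp]
lemma extendZero_self [Zero S] {v : V} (f : {w : V | w ≠ v} → S) : extendZero f v = 0 :=
  Function.extend_apply' _ _ _ (by simp)

@[simp]
lemma extendZero_coe [Zero S] {v : V} (f : {w : V | w ≠ v} → S) (i : {w : V | w ≠ v}) :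
    extendZero f i = f i :=
  Subtype.val_injective.extend_apply ..

end VertexDeletion

section CommRing

variable {R V W : Type*} [CommRing R] [Fintype V] [DecidableEq V] [Fintype W] [DecidableEq W]

lemma derivative_det (M : Matrix V V R[X]) :
    derivative M.det = ∑ i, (M.updateRow i fun j => derivative (M i j)).det := by
  simp_rw [← det_transpose M, ← det_transpose (M.updateRow _ _), det_apply']
  rw [Finset.sum_comm, derivative_sum]
  refine Finset.sum_congr rfl fun σ _ => ?_
  rw [← Finset.mul_sum, derivative_mul, derivative_intCast, zero_mul, zero_add,
    derivative_prod_finset]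
  congr 1
  refine Finset.sum_congr rfl fun i _ => ?_
  rw [← Finset.prod_erase_mul _ _ (Finset.mem_univ i)]
  congr 1
  · refine Finset.prod_congr rfl fun j hj => ?_
    simp [Finset.ne_of_mem_erase hj]
  · simp

lemma sum_eq_add_sum_ne {M : Type*} [AddCommMonoid M] (f : V → M) (v : V) :
    ∑ i, f i = f v + ∑ i : {w : V | w ≠ v}, f i := by
  rw [Fintype.sum_eq_add_sum_subtype_ne f v]
  rfl

lemma mulVec_extendZero (A : Matrix V V R) {v : V} (f : {w : V | w ≠ v} → R) (i : V) :
    (A *ᵥ extendZero f) i = ∑ j : {w : V | w ≠ v}, A i j * f j := by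
  simp [mulVec, dotProduct, sum_eq_add_sum_ne _ v]

lemma adjugate_apply_self (M : Matrix V V R) (v : V) :
    adjugate M v v = (deleteVertex M v).det := by
  rw [adjugate_apply, ← det_submatrix_equiv_self (Equiv.subtypeNeSumPUnit.{0} v)]
  have h : (M.updateRow v (Pi.single v 1)).submatrix
      (Equiv.subtypeNeSumPUnit.{0} v) (Equiv.subtypeNeSumPUnit.{0} v) =
      fromBlocks (deleteVertex M v) (of fun i _ => M i v) 0 (1 : Matrix PUnit PUnit R) := by
    ext (i | i) (j | j)
    · have : i.1 ≠ v := i.2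
      simp [deleteVertex, this]
    · have : i.1 ≠ v := i.2
      simp [this]
    · have : j.1 ≠ v := j.2
      simp [this]
    · simp
  rw [h]
  exact (det_fromBlocks_zero₂₁ _ _ _).trans (by simp)

lemma charmatrix_deleteVertex (A : Matrix V V R) (v : V) :
    charmatrix (deleteVertex A v) = deleteVertex (charmatrix A) v := by
  ext1 i j
  simp [charmatrix_apply, deleteVertex, diagonal_apply, Subtype.ext_iff]

lemma adjugate_charmatrix_apply_self (A : Matrix V V R) (v : V) :
    adjugate (charmatrix A) v v = (deleteVertex A v).charpoly := by
  rw [adjugate_apply_self, charpoly, charmatrix_deleteVertex]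

lemma derivative_charpoly (A : Matrix V V R) :
    derivative A.charpoly = ∑ v, (deleteVertex A v).charpoly := by
  rw [charpoly, derivative_det]
  refine Finset.sum_congr rfl fun v _ => ?_
  have h : (fun j => derivative (charmatrix A v j)) = Pi.single v 1 := by
    ext1 j
    by_cases hj : v = j
    · simp [← hj]
    · simp [hj, Ne.symm hj]
  rw [h, ← adjugate_apply, adjugate_charmatrix_apply_self]

/-- The polynomials `walkNumerator A v = det (xI - A) ⋅ ((xI - A)⁻¹ e) v`. Dividing by the
characteristic polynomial gives the generating function `∑ k, (A ^ k e) v x ^ (-k - 1)` of the walks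
starting at `v`. -/
def walkNumerator (A : Matrix V V R) : V → R[X] :=
  adjugate (charmatrix A) *ᵥ 1

/-- The polynomial `det (xI - A) ⋅ eᵀ (xI - A)⁻¹ e`, the numerator of the generating function of all
walks. -/
def totalWalkNumerator (A : Matrix V V R) : R[X] :=
  ∑ v, walkNumerator A v

lemma walkNumerator_reindex (A : Matrix V V R) (e : V ≃ W) (v : V) :
    walkNumerator (A.reindex e e) (e v) = walkNumerator A v := by
  simp only [walkNumerator, charmatrix_reindex, adjugate_reindex, mulVec, dotProduct]
  rw [← e.sum_comp]
  simp

lemma totalWalkNumerator_reindex (A : Matrix V V R) (e : V ≃ W) :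
    totalWalkNumerator (A.reindex e e) = totalWalkNumerator A := by
  simp_rw [totalWalkNumerator, ← e.sum_comp (walkNumerator (A.reindex e e)),
    walkNumerator_reindex]

-- Taking determinants in `(M + u wᵀ) * adjugate M = det M • 1 + u (wᵀ * adjugate M)` gives the
-- matrix determinant lemma for `M = xI - A` up to a power of the regular element `det M`.
lemma charpoly_sub_vecMulVec (A : Matrix V V R) (u w : V → R) :
    (A - vecMulVec u w).charpoly =
      A.charpoly + (C ∘ w) ⬝ᵥ (adjugate (charmatrix A) *ᵥ (C ∘ u)) := by
  rcases isEmpty_or_nonempty V with _ | _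
  · simp
  set M := charmatrix A with hM
  set x := (C ∘ w) ᵥ* adjugate M with hx
  have hsub : charmatrix (A - vecMulVec u w) = M + vecMulVec (C ∘ u) (C ∘ w) := by
    ext1 i j
    simp [hM, charmatrix_apply, vecMulVec_apply, sub_add]
  have hmul : (M + vecMulVec (C ∘ u) (C ∘ w)) * adjugate M =
      scalar V A.charpoly - vecMulVec (-(C ∘ u)) x := by
    rw [add_mul, mul_adjugate, vecMulVec_mul, neg_vecMulVec, sub_neg_eq_add]
    rw [smul_one_eq_diagonal]
    rfl
  have hdet := congrArg det hmul
  rw [det_mul, det_adjugate, ← hsub, ← eval_charpoly, charpoly_vecMulVec] at hdet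
  have hcard : Fintype.card V = (Fintype.card V - 1) + 1 :=
    (Nat.sub_add_cancel Fintype.card_pos).symm
  apply (A.charpoly_monic.pow (Fintype.card V - 1)).isRegular.right
  calc (A - vecMulVec u w).charpoly * A.charpoly ^ (Fintype.card V - 1)
      = A.charpoly ^ Fintype.card V + (C ∘ u) ⬝ᵥ x * A.charpoly ^ (Fintype.card V - 1) := by
        simpa [charpoly, hM] using hdet
    _ = (A.charpoly + (C ∘ w) ⬝ᵥ (adjugate M *ᵥ (C ∘ u))) *
          A.charpoly ^ (Fintype.card V - 1) := by
        rw [dotProduct_mulVec, ← hx, dotProduct_comm x, add_mul, ← pow_succ', ← hcard]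

lemma walkNumerator_eq_charpoly_sub (A : Matrix V V R) (v : V) :
    walkNumerator A v = (A - vecMulVec 1 (Pi.single v 1)).charpoly - A.charpoly := by
  have hone : C ∘ (1 : V → R) = 1 := by ext1; simp
  have hsingle : C ∘ (Pi.single v 1 : V → R) = Pi.single v 1 := by
    ext1 i; simp [Pi.single_apply, apply_ite C]
  rw [charpoly_sub_vecMulVec, hone, hsingle, single_one_dotProduct, add_sub_cancel_left,
    walkNumerator]

lemma totalWalkNumerator_eq_charpoly_sub (A : Matrix V V R) :
    totalWalkNumerator A = (A - vecMulVec 1 1).charpoly - A.charpoly := by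
  have hone : C ∘ (1 : V → R) = 1 := by ext1; simp
  rw [charpoly_sub_vecMulVec, hone, one_dotProduct, add_sub_cancel_left, totalWalkNumerator,
    walkNumerator]

lemma derivative_totalWalkNumerator (A : Matrix V V R) :
    derivative (totalWalkNumerator A) = ∑ v, totalWalkNumerator (deleteVertex A v) := by
  simp_rw [totalWalkNumerator_eq_charpoly_sub, derivative_sub, derivative_charpoly,
    Finset.sum_sub_distrib]
  rfl

lemma degree_walkNumerator_lt (A : Matrix V V R) (v : V) :
    (walkNumerator A v).degree < Fintype.card V := by
  nontriviality R
  rw [walkNumerator_eq_charpoly_sub, ← charpoly_degree_eq_dim (A - vecMulVec 1 (Pi.single v 1))]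
  exact degree_sub_lt_left (by simp only [charpoly_degree_eq_dim]) (charpoly_monic _).ne_zero
    (by simp only [(charpoly_monic _).leadingCoeff])

lemma charmatrix_mulVec_walkNumerator (A : Matrix V V R) :
    charmatrix A *ᵥ walkNumerator A = fun _ => A.charpoly := by
  rw [walkNumerator, mulVec_mulVec, mul_adjugate, smul_mulVec, one_mulVec]
  ext1
  simp [charpoly]

lemma X_mul_walkNumerator (A : Matrix V V R) (v : V) :
    X * walkNumerator A v = (A.map C *ᵥ walkNumerator A) v + A.charpoly := by
  rw [← congrFun (charmatrix_mulVec_walkNumerator A) v, charmatrix, sub_mulVec]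
  simp [scalar_apply]

-- The walk numerators of `A - v`, extended by zero, solve the linear system of `A` with right-hand
-- side a multiple of `e` corrected at `v`; multiplying by the adjugate solves it a second time.
lemma charpoly_smul_extendZero_walkNumerator (A : Matrix V V R) (v : V) :
    A.charpoly • extendZero (walkNumerator (deleteVertex A v)) =
      (deleteVertex A v).charpoly • walkNumerator A -
        ((deleteVertex A v).charpoly +
          (C ∘ deletedRow A v) ⬝ᵥ walkNumerator (deleteVertex A v)) •
          (adjugate (charmatrix A)).col v := by
  set P := (deleteVertex A v).charpoly
  set y := walkNumerator (deleteVertex A v) with hy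
  set r := (C ∘ deletedRow A v) ⬝ᵥ y with hr
  have hsystem : charmatrix A *ᵥ extendZero y = P • 1 - (P + r) • Pi.single v 1 := by
    ext1 i
    rw [mulVec_extendZero]
    obtain rfl | hi := eq_or_ne i v
    · have hne (j : {w : V | w ≠ i}) : i ≠ j := j.2.symm
      simp [charmatrix_apply_ne _ _ _ (hne _), hr, dotProduct, deletedRow]
    · calc ∑ j : {w : V | w ≠ v}, charmatrix A i j * y j
          = (charmatrix (deleteVertex A v) *ᵥ y) ⟨i, hi⟩ := by rw [charmatrix_deleteVertex]; rfl
        _ = P := by rw [hy, charmatrix_mulVec_walkNumerator]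
        _ = (P • 1 - (P + r) • Pi.single v 1 : V → R[X]) i := by simp [hi]
  have h := congrArg (adjugate (charmatrix A) *ᵥ ·) hsystem
  simpa [adjugate_mul, smul_mulVec, mulVec_sub, mulVec_smul, walkNumerator, charpoly] using h

lemma walkNumerator_eq_charpoly_deleteVertex_add (A : Matrix V V R) (v : V) :
    walkNumerator A v = (deleteVertex A v).charpoly +
      (C ∘ deletedRow A v) ⬝ᵥ walkNumerator (deleteVertex A v) := by
  have h := congrFun (charpoly_smul_extendZero_walkNumerator A v) v
  simp only [Pi.smul_apply, Pi.sub_apply, extendZero_self, col_apply,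
    adjugate_charmatrix_apply_self, mul_zero, smul_eq_mul] at h
  apply (deleteVertex A v).charpoly_monic.isRegular.left
  linear_combination -h

lemma walkNumerator_sq {A : Matrix V V R} (hA : A.IsSymm) (v : V) :
    walkNumerator A v ^ 2 = totalWalkNumerator A * (deleteVertex A v).charpoly -
      totalWalkNumerator (deleteVertex A v) * A.charpoly := by
  have hsymm : (charmatrix A).IsSymm := by rw [IsSymm, ← charmatrix_transpose, hA]
  have hcol : ∑ i, adjugate (charmatrix A) i v = walkNumerator A v := by
    simp [walkNumerator, mulVec, dotProduct, hsymm.adjugate.apply]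
  have h := congrArg (∑ i, · i) (charpoly_smul_extendZero_walkNumerator A v)
  rw [← walkNumerator_eq_charpoly_deleteVertex_add] at h
  simp only [Pi.smul_apply, Pi.sub_apply, Finset.sum_sub_distrib, ← Finset.mul_sum, col_apply,
    hcol, smul_eq_mul, sum_eq_add_sum_ne (extendZero _) v, extendZero_self, extendZero_coe,
    zero_add] at h
  rw [totalWalkNumerator, totalWalkNumerator]
  linear_combination h

lemma degree_dotProduct_walkNumerator_lt (A : Matrix V V R) (d : V → R) :
    ((C ∘ d) ⬝ᵥ walkNumerator A).degree < Fintype.card V := by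
  rw [← mem_degreeLT, dotProduct]
  refine Submodule.sum_mem _ fun v _ => ?_
  rw [Function.comp_apply, ← smul_eq_C_mul]
  exact Submodule.smul_mem _ _ (mem_degreeLT.2 (degree_walkNumerator_lt A v))

lemma degree_totalWalkNumerator_lt [Nontrivial R] (A : Matrix V V R) :
    (totalWalkNumerator A).degree < A.charpoly.degree := by
  rw [charpoly_degree_eq_dim, ← mem_degreeLT]
  exact Submodule.sum_mem _ fun v _ => mem_degreeLT.2 (degree_walkNumerator_lt A v)

lemma degree_walkNumerator_sub_charpoly_lt [Nontrivial R] (A : Matrix V V R) (v : V) :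
    (walkNumerator A v - (deleteVertex A v).charpoly).degree <
      (deleteVertex A v).charpoly.degree := by
  rw [walkNumerator_eq_charpoly_deleteVertex_add, add_sub_cancel_left, charpoly_degree_eq_dim]
  exact degree_dotProduct_walkNumerator_lt _ _

lemma X_mul_dotProduct_walkNumerator (A : Matrix V V R) (d : V → R) :
    X * ((C ∘ d) ⬝ᵥ walkNumerator A) =
      (C ∘ (d ᵥ* A)) ⬝ᵥ walkNumerator A + C (∑ v, d v) * A.charpoly := by
  have hvecMul : C ∘ (d ᵥ* A) = (C ∘ d) ᵥ* A.map C := by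
    ext1 i
    exact RingHom.map_vecMul C A d i
  rw [hvecMul, ← dotProduct_mulVec, map_sum, Finset.sum_mul]
  simp only [dotProduct, Finset.mul_sum, ← Finset.sum_add_distrib, Function.comp_apply]
  refine Finset.sum_congr rfl fun v _ => ?_
  rw [mul_left_comm, X_mul_walkNumerator, mul_add]

lemma sum_eq_zero_of_dotProduct_walkNumerator_eq_zero {A : Matrix V V R} {d : V → R}
    (h : (C ∘ d) ⬝ᵥ walkNumerator A = 0) : ∑ v, d v = 0 := by
  nontriviality R
  have hX := X_mul_dotProduct_walkNumerator A d
  have hlead : A.charpoly.coeff (Fintype.card V) = 1 := by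
    rw [← charpoly_natDegree_eq_dim A, A.charpoly_monic.coeff_natDegree]
  rw [h, mul_zero] at hX
  have hcoeff := congrArg (coeff · (Fintype.card V)) hX
  simp only [coeff_zero, coeff_add, coeff_C_mul, hlead, mul_one, zero_add,
    coeff_eq_zero_of_degree_lt (degree_dotProduct_walkNumerator_lt A _)] at hcoeff
  exact hcoeff.symm

-- A linear relation `d` between the walk numerators forces `∑ v, d v = 0`, and then
-- multiplication by `X` turns it into the relation `d ᵥ* A`.
lemma dotProduct_pow_mulVec_one_eq_zero {A : Matrix V V R} {d : V → R}
    (h : (C ∘ d) ⬝ᵥ walkNumerator A = 0) (k : ℕ) : d ⬝ᵥ (A ^ k *ᵥ 1) = 0 := by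
  have hsum := sum_eq_zero_of_dotProduct_walkNumerator_eq_zero h
  induction k generalizing d with
  | zero => simpa [dotProduct] using hsum
  | succ k ih =>
    have hnext : (C ∘ (d ᵥ* A)) ⬝ᵥ walkNumerator A = 0 := by
      have hX := X_mul_dotProduct_walkNumerator A d
      rw [h, hsum, mul_zero, map_zero, zero_mul, add_zero] at hX
      exact hX.symm
    rw [pow_succ', ← mulVec_mulVec, dotProduct_mulVec]
    exact ih hnext (sum_eq_zero_of_dotProduct_walkNumerator_eq_zero hnext)

end CommRing

section IsDomain

variable {R V W : Type*} [CommRing R] [IsDomain R] [CharZero R] [Fintype V] [DecidableEq V]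
  [Fintype W] [DecidableEq W]

lemma exists_eq_add_C_of_derivative_eq {p q : R[X]} (h : derivative p = derivative q) :
    ∃ c, p = q + C c := by
  refine ⟨(p - q).coeff 0, ?_⟩
  rw [← eq_C_of_derivative_eq_zero (by rw [derivative_sub, h, sub_self]), add_sub_cancel]

-- By `walkNumerator_sq`, the polynomial `s = walkNumerator A v + walkNumerator B w` divides one of
-- degree smaller than `card V - 1`, which is the degree of `s`; hence the latter is zero.
lemma two_mul_walkNumerator_sub_eq_C {A : Matrix V V R} {B : Matrix W W R} (hA : A.IsSymm)
    (hB : B.IsSymm) {v : V} {w : W} {c d : R} (hcharpoly : B.charpoly = A.charpoly + C c)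
    (htotal : totalWalkNumerator B = totalWalkNumerator A + C d)
    (hcharpoly_delete : (deleteVertex B w).charpoly = (deleteVertex A v).charpoly)
    (htotal_delete :
      totalWalkNumerator (deleteVertex B w) = totalWalkNumerator (deleteVertex A v)) :
    2 * (walkNumerator B w - walkNumerator A v) = C d := by
  set P := (deleteVertex A v).charpoly
  set N := totalWalkNumerator (deleteVertex A v)
  set s := walkNumerator A v + walkNumerator B w with hs
  set t := 2 * (walkNumerator B w - walkNumerator A v) - C d with ht
  have hrest : (s - 2 * P).degree < P.degree := by
    have hrestA := degree_walkNumerator_sub_charpoly_lt A v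
    have hrestB := degree_walkNumerator_sub_charpoly_lt B w
    rw [hcharpoly_delete] at hrestB
    rw [show s - 2 * P = (walkNumerator A v - P) + (walkNumerator B w - P) by rw [hs]; ring]
    exact (degree_add_le _ _).trans_lt (max_lt hrestA hrestB)
  have hdegree : s.degree = P.degree := by
    have htwo : (2 * P).degree = P.degree := degree_C_mul two_ne_zero
    rw [← sub_add_cancel s (2 * P), degree_add_eq_right_of_degree_lt (hrest.trans_eq htwo.symm),
      htwo]
  have hts : t * s = -(C (2 * c) * N + C d * (s - 2 * P)) := by
    have hsqA := walkNumerator_sq hA v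
    have hsqB := walkNumerator_sq hB w
    rw [hcharpoly, htotal, hcharpoly_delete, htotal_delete] at hsqB
    rw [ht, hs, C_mul, map_ofNat]
    linear_combination 2 * hsqB - 2 * hsqA
  have hsmall : (t * s).degree < s.degree := by
    rw [hts, degree_neg, hdegree, ← smul_eq_C_mul, ← smul_eq_C_mul]
    exact (degree_add_le _ _).trans_lt <| max_lt
      ((degree_smul_le _ _).trans_lt (degree_totalWalkNumerator_lt _))
      ((degree_smul_le _ _).trans_lt hrest)
  have hs0 : s ≠ 0 := by
    intro h
    rw [h, mul_zero] at hsmall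
    exact hsmall.false
  have ht0 : t = 0 :=
    (mul_eq_zero.1 (eq_zero_of_dvd_of_degree_lt (dvd_mul_left s t) hsmall)).resolve_right hs0
  exact sub_eq_zero.1 ht0

-- Summed over all vertices, `two_mul_walkNumerator_sub_eq_C` says `2 * d = card V * d`.
lemma walkNumerator_eq_of_deleteVertex {A : Matrix V V R} {B : Matrix W W R} (hA : A.IsSymm)
    (hB : B.IsSymm) (hV : Fintype.card V ≠ 2) (σ : V ≃ W)
    (hcharpoly : ∀ v, (deleteVertex B (σ v)).charpoly = (deleteVertex A v).charpoly)
    (htotal : ∀ v, totalWalkNumerator (deleteVertex B (σ v)) =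
      totalWalkNumerator (deleteVertex A v)) (v : V) :
    walkNumerator B (σ v) = walkNumerator A v := by
  obtain ⟨c, hc⟩ : ∃ c, B.charpoly = A.charpoly + C c := by
    apply exists_eq_add_C_of_derivative_eq
    simp_rw [derivative_charpoly, ← σ.sum_comp fun w => (deleteVertex B w).charpoly, hcharpoly]
  obtain ⟨d, hd⟩ : ∃ d, totalWalkNumerator B = totalWalkNumerator A + C d := by
    apply exists_eq_add_C_of_derivative_eq
    simp_rw [derivative_totalWalkNumerator,
      ← σ.sum_comp fun w => totalWalkNumerator (deleteVertex B w), htotal]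
  have hdiff (v : V) : 2 * (walkNumerator B (σ v) - walkNumerator A v) = C d :=
    two_mul_walkNumerator_sub_eq_C hA hB hc hd (hcharpoly v) (htotal v)
  have hd0 : d = 0 := by
    have hsum : 2 * C d = (Fintype.card V : R[X]) * C d := calc
      2 * C d = 2 * (totalWalkNumerator B - totalWalkNumerator A) := by rw [hd, add_sub_cancel_left]
      _ = ∑ v, 2 * (walkNumerator B (σ v) - walkNumerator A v) := by
        rw [← Finset.mul_sum, Finset.sum_sub_distrib, σ.sum_comp (walkNumerator B),
          totalWalkNumerator, totalWalkNumerator]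
      _ = (Fintype.card V : R[X]) * C d := by simp [hdiff]
    by_contra hne
    have hcard : (2 : R[X]) = Fintype.card V := mul_right_cancel₀ (C_ne_zero.2 hne) hsum
    exact hV (by exact_mod_cast hcard.symm)
  have hzero := hdiff v
  rw [hd0, map_zero] at hzero
  exact sub_eq_zero.1 ((mul_eq_zero.1 hzero).resolve_left two_ne_zero)

end IsDomain

section Controllable

variable {V : Type} [Fintype V] [DecidableEq V]

lemma eq_of_dotProduct_walkNumerator_eq {A : Matrix V V ℝ}
    (hA : (walkMatrix A).rank = Fintype.card V) {d d' : V → ℝ}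
    (h : (C ∘ d) ⬝ᵥ walkNumerator A = (C ∘ d') ⬝ᵥ walkNumerator A) : d = d' := by
  have hrows : LinearIndependent ℝ (walkMatrix A).row := by
    rw [linearIndependent_iff_card_eq_finrank_span, Set.finrank, ← rank_eq_finrank_span_row, hA]
  have hsub : (C ∘ (d - d')) ⬝ᵥ walkNumerator A = 0 := by
    rw [show C ∘ (d - d') = C ∘ d - C ∘ d' by ext1; simp, sub_dotProduct, h, sub_self]
  have hvecMul : (d - d') ᵥ* walkMatrix A = 0 := by
    ext1 k
    exact dotProduct_pow_mulVec_one_eq_zero hsub k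
  rw [← sub_eq_zero]
  exact vecMul_injective_iff.2 hrows (hvecMul.trans (zero_vecMul _).symm)

lemma deletedRow_comp_eq_of_walkNumerator_eq {W : Type*} [Fintype W] [DecidableEq W]
    {A : Matrix V V ℝ} {B : Matrix W W ℝ} {v : V} {w : W}
    (hA : (walkMatrix (deleteVertex A v)).rank = Fintype.card {i : V | i ≠ v})
    (e : {i : V | i ≠ v} ≃ {j : W | j ≠ w})
    (he : (deleteVertex A v).reindex e e = deleteVertex B w)
    (h : walkNumerator B w = walkNumerator A v) :
    deletedRow B w ∘ e = deletedRow A v := by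
  apply eq_of_dotProduct_walkNumerator_eq hA
  rw [walkNumerator_eq_charpoly_deleteVertex_add, walkNumerator_eq_charpoly_deleteVertex_add,
    ← he, charpoly_reindex] at h
  rw [← add_left_cancel h, dotProduct, dotProduct, ← e.sum_comp]
  simp only [Function.comp_apply, walkNumerator_reindex]

end Controllable

section Graph

variable {V W : Type}

lemma adjMat_eq_adjMatrix [Fintype V] (G : SimpleGraph V) : adjMat G = G.adjMatrix ℝ :=
  rfl

lemma isSymm_adjMat [Fintype V] (G : SimpleGraph V) : (adjMat G).IsSymm := by
  rw [adjMat_eq_adjMatrix]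
  exact G.isSymm_adjMatrix

lemma deleteVertex_adjMat [Fintype V] [DecidableEq V] (G : SimpleGraph V) (v : V) :
    deleteVertex (adjMat G) v = adjMat (G.induce {w : V | w ≠ v}) :=
  rfl

lemma reindex_deleteVertex_adjMat [Fintype V] [Fintype W] {G : SimpleGraph V} {H : SimpleGraph W}
    {v : V} {w : W} (f : G.induce {i : V | i ≠ v} ≃g H.induce {j : W | j ≠ w}) :
    (deleteVertex (adjMat G) v).reindex f.toEquiv f.toEquiv = deleteVertex (adjMat H) w := by
  rw [deleteVertex_adjMat, deleteVertex_adjMat, adjMat_eq_adjMatrix, adjMat_eq_adjMatrix]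
  exact f.reindex_adjMatrix ℝ

lemma adj_iff_of_deletedRow_comp_eq [Fintype V] [Fintype W] {G : SimpleGraph V} {H : SimpleGraph W}
    {v : V} {w : W} {e : {i : V | i ≠ v} ≃ {j : W | j ≠ w}}
    (h : deletedRow (adjMat H) w ∘ e = deletedRow (adjMat G) v) (i : {i : V | i ≠ v}) :
    H.Adj w (e i) ↔ G.Adj v i := by
  have hi : (if H.Adj w (e i) then (1 : ℝ) else 0) = if G.Adj v i then 1 else 0 := congrFun h i
  split_ifs at hi <;> simp_all

lemma nonempty_iso_of_induce_iso {G : SimpleGraph V} {H : SimpleGraph W} {v : V} {w : W}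
    (f : G.induce {i : V | i ≠ v} ≃g H.induce {j : W | j ≠ w})
    (h : ∀ i, H.Adj w (f i) ↔ G.Adj v i) : Nonempty (G ≃g H) := by
  let e : {i // i ≠ v} ≃ {j // j ≠ w} := f.toEquiv
  let g : V ≃ W := (Equiv.optionSubtypeNe v).symm.trans
    (e.optionCongr.trans (Equiv.optionSubtypeNe w))
  have hv : g v = w := by simp [g]
  have hne (i : {i // i ≠ v}) : g i = e i := by simp [g, i.2]
  refine ⟨⟨g, fun {i j} => ?_⟩⟩
  obtain rfl | hi := eq_or_ne i v
  · obtain rfl | hj := eq_or_ne j i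
    · simp
    · rw [hv, hne ⟨j, hj⟩]
      exact h ⟨j, hj⟩
  · obtain rfl | hj := eq_or_ne j v
    · rw [hv, hne ⟨i, hi⟩, H.adj_comm, G.adj_comm]
      exact h ⟨i, hi⟩
    · rw [hne ⟨i, hi⟩, hne ⟨j, hj⟩]
      exact f.map_adj_iff (v := ⟨i, hi⟩) (w := ⟨j, hj⟩)

end Graph

/-- Hong's theorem. If some vertex-deleted subgraph `G - u` is
controllable, then `G` is reconstructible. -/
theorem reconstructible_of_controllable_vertex_deleted
    {n : ℕ} (hn : 3 ≤ n) (G : SimpleGraph (Fin n)) (u : Fin n)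
    (hctrl : (walkMatrix (adjMat (G.induce {w : Fin n | w ≠ u}))).rank
        = Fintype.card {w : Fin n | w ≠ u} ) :
    Reconstructible G := by
  rw [← deleteVertex_adjMat] at hctrl
  rintro H ⟨σ, hσ⟩
  let f (v : Fin n) := (hσ v).some
  have hdeck (v : Fin n) := reindex_deleteVertex_adjMat (f v)
  have hwalk : walkNumerator (adjMat H) (σ u) = walkNumerator (adjMat G) u := by
    apply walkNumerator_eq_of_deleteVertex (isSymm_adjMat G) (isSymm_adjMat H)
    · rw [Fintype.card_fin]
      omega
    · exact fun v => by rw [← hdeck, charpoly_reindex]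
    · exact fun v => by rw [← hdeck, totalWalkNumerator_reindex]
  have hrow : deletedRow (adjMat H) (σ u) ∘ f u = deletedRow (adjMat G) u :=
    deletedRow_comp_eq_of_walkNumerator_eq hctrl (f u).toEquiv (hdeck u) hwalk
  exact nonempty_iso_of_induce_iso (f u) (adj_iff_of_deletedRow_comp_eq hrow)
end
end
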